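/- Define π_1(λ)=2−λ, π_2(λ)=π_1(λ)²−2, θ_3(λ)=1−λ, π_3(λ)=π_2(λ)²−2θ_3(λ)², θ_4(λ)=θ_3(λ)²−λ, π_4(λ)=π_3(λ)²−2θ_3(λ)²θ_4(λ)². Then π_3(λ) = 2 − 12λ + 18λ² − 8λ³ + λ⁴ and π_4(λ) = 2 − 32λ + 168λ² − 396λ³ + 472λ⁴ − 296λ⁵ + 98λ⁶ − 16λ⁷ + λ⁸; moreover −λ·π_1(λ)·π_2(λ)·π_3(λ) is the characteristic polynomial det(λI − L) of the graph Laplacian L of the DSC(1) tree of generation 3 (the tree on 8 vertices obtained by attaching a pendant vertex to every vertex at each of 3 steps, starting from a single vertex). -/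

import Mathlib

open Polynomial

/-- The DSC(1) tree of generation `n`: start from a single vertex `0`; at step
`k+1` (for `k = 0, …, n-1`), every existing vertex `v < 2^k` receives a new
pendant vertex `v + 2^k`. -/
def dscTree (n : ℕ) : SimpleGraph (Fin (2 ^ n)) :=
  SimpleGraph.fromRel (fun a b => ∃ k < n, (a : ℕ) < 2 ^ k ∧ (b : ℕ) = (a : ℕ) + 2 ^ k)

noncomputable instance (n : ℕ) : DecidableRel (dscTree n).Adj := Classical.decRel _

/-- A computable decision procedure for adjacency in the tree. -/
@[reducible]
def dscDec : DecidableRel (dscTree 3).Adj := fun a b =>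
  decidable_of_iff
    (a ≠ b ∧ ((∃ k < 3, (a : ℕ) < 2 ^ k ∧ (b : ℕ) = (a : ℕ) + 2 ^ k) ∨
      (∃ k < 3, (b : ℕ) < 2 ^ k ∧ (a : ℕ) = (b : ℕ) + 2 ^ k)))
    (by unfold dscTree; rw [SimpleGraph.fromRel_adj])

/-- The explicit Laplacian of the generation 3 tree. -/
def lap8 : Matrix (Fin 8) (Fin 8) ℤ :=
  !![3, -1, -1, 0, -1, 0, 0, 0;
     -1, 3, 0, -1, 0, -1, 0, 0;
     -1, 0, 2, 0, 0, 0, -1, 0;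
     0, -1, 0, 2, 0, 0, 0, -1;
     -1, 0, 0, 0, 1, 0, 0, 0;
     0, -1, 0, 0, 0, 1, 0, 0;
     0, 0, -1, 0, 0, 0, 1, 0;
     0, 0, 0, -1, 0, 0, 0, 1]

/-- The entries of the Laplacian, computed with the explicit decision procedure. -/
def lapEntry : Fin 8 → Fin 8 → ℤ :=
  @SimpleGraph.lapMatrix (Fin (2 ^ 3)) ℤ _ (dscTree 3) dscDec _ _

theorem lap_eq : (dscTree 3).lapMatrix ℤ = lap8 := by
  have h : (inferInstance : DecidableRel (dscTree 3).Adj) = dscDec := Subsingleton.elim _ _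
  have h2 : @SimpleGraph.lapMatrix (Fin (2 ^ 3)) ℤ _ (dscTree 3) dscDec _ _ = lap8 := by
    have : ∀ i j : Fin 8, lapEntry i j = lap8 i j := by
      intro i j
      fin_cases i <;> fin_cases j <;> decide +kernel
    ext i j
    exact this i j
  rw [← h2]
  congr

theorem charmatrix_lap8 : lap8.charmatrix =
  !![X - 3, 1, 1, 0, 1, 0, 0, 0;
     1, X - 3, 0, 1, 0, 1, 0, 0;
     1, 0, X - 2, 0, 0, 0, 1, 0;
     0, 1, 0, X - 2, 0, 0, 0, 1;
     1, 0, 0, 0, X - 1, 0, 0, 0;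
     0, 1, 0, 0, 0, X - 1, 0, 0;
     0, 0, 1, 0, 0, 0, X - 1, 0;
     0, 0, 0, 1, 0, 0, 0, X - 1] := by
  ext1 i j
  fin_cases i <;> fin_cases j <;> simp [lap8]

set_option maxHeartbeats 4000000 in
theorem det_explicit (x : ℤ[X]) : Matrix.det
  !![x - 3, 1, 1, 0, 1, 0, 0, 0;
     1, x - 3, 0, 1, 0, 1, 0, 0;
     1, 0, x - 2, 0, 0, 0, 1, 0;
     0, 1, 0, x - 2, 0, 0, 0, 1;
     1, 0, 0, 0, x - 1, 0, 0, 0;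
     0, 1, 0, 0, 0, x - 1, 0, 0;
     0, 0, 1, 0, 0, 0, x - 1, 0;
     0, 0, 0, 1, 0, 0, 0, x - 1] =
    -x * (2 - x) * ((2 - x) ^ 2 - 2) * (((2 - x) ^ 2 - 2) ^ 2 - 2 * (1 - x) ^ 2) := by
  simp [Matrix.det_succ_row_zero, Fin.sum_univ_succ, Fin.succAbove]
  ring

theorem stmt_19 (π₁ π₂ π₃ π₄ θ₃ θ₄ : Polynomial ℤ)
    (hπ₁ : π₁ = 2 - X) (hπ₂ : π₂ = π₁ ^ 2 - 2)
    (hθ₃ : θ₃ = 1 - X) (hπ₃ : π₃ = π₂ ^ 2 - 2 * θ₃ ^ 2)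
    (hθ₄ : θ₄ = θ₃ ^ 2 - X) (hπ₄ : π₄ = π₃ ^ 2 - 2 * θ₃ ^ 2 * θ₄ ^ 2) :
    π₃ = 2 - 12 * X + 18 * X ^ 2 - 8 * X ^ 3 + X ^ 4 ∧
    π₄ = 2 - 32 * X + 168 * X ^ 2 - 396 * X ^ 3 + 472 * X ^ 4 - 296 * X ^ 5
        + 98 * X ^ 6 - 16 * X ^ 7 + X ^ 8 ∧
    Matrix.charpoly ((dscTree 3).lapMatrix ℤ) = -X * π₁ * π₂ * π₃ := by
  subst hπ₁ hπ₂ hθ₃ hπ₃ hθ₄ hπ₄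
  refine ⟨by ring, by ring, ?_⟩
  rw [lap_eq]
  exact (congrArg Matrix.det charmatrix_lap8).trans (det_explicit X)
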